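/- Fix an integer ℓ ≥ 0 and let H_ℓ^ℂ be the space of complex harmonic homogeneous polynomials of degree ℓ in three variables, with SO(3) acting by (g·p)(x) = p(g⁻¹x). For each integer m, the subspace of all p ∈ H_ℓ^ℂ such that the action of the embedded rotation diag(R_φ, 1) multiplies p by e^{imφ} for every φ has complex dimension 1 if |m| ≤ ℓ, and is the zero subspace if |m| > ℓ. Consequently, the restriction of this representation to the embedded SO(2) is the direct sum of the characters φ ↦ e^{imφ} for −ℓ ≤ m ≤ ℓ, each occurring with multiplicity one. -/

import Mathlib

open Matrix MvPolynomial

/-- The Laplacian on complex polynomials in three variables. -/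
noncomputable def laplacianC : MvPolynomial (Fin 3) ℂ →ₗ[ℂ] MvPolynomial (Fin 3) ℂ :=
  ∑ i : Fin 3, ((MvPolynomial.pderiv i).toLinearMap ∘ₗ (MvPolynomial.pderiv i).toLinearMap)

/-- `H_ℓ^ℂ`: complex harmonic homogeneous polynomials of degree `ℓ` in three variables. -/
noncomputable def harmonicHomogC (ℓ : ℕ) : Submodule ℂ (MvPolynomial (Fin 3) ℂ) :=
  MvPolynomial.homogeneousSubmodule (Fin 3) ℂ ℓ ⊓ LinearMap.ker laplacianC

/-- Substitution `p(x) ↦ p(Ax)` of the linear change of variables given by a real matrix `A`,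
acting on complex polynomials. -/
noncomputable def matrixSubstC (A : Matrix (Fin 3) (Fin 3) ℝ) :
    MvPolynomial (Fin 3) ℂ →ₗ[ℂ] MvPolynomial (Fin 3) ℂ :=
  (MvPolynomial.aeval (fun i => ∑ j : Fin 3, ((A i j : ℂ)) • MvPolynomial.X j)).toLinearMap

/-- The rotation `diag(R_φ, 1)` of `ℝ³` about the third coordinate axis. -/
noncomputable def rot3 (φ : ℝ) : Matrix (Fin 3) (Fin 3) ℝ :=
  !![Real.cos φ, -Real.sin φ, 0; Real.sin φ, Real.cos φ, 0; 0, 0, 1]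

/-- The subspace of `H_ℓ^ℂ` on which the embedded rotation `diag(R_φ, 1)` acts (by
`(g·p)(x) = p(g⁻¹x)`, i.e. by `matrixSubstC (rot3 (−φ))`) as multiplication by `e^{imφ}`
for every `φ`. -/
noncomputable def weightSpace (ℓ : ℕ) (m : ℤ) : Submodule ℂ (MvPolynomial (Fin 3) ℂ) :=
  harmonicHomogC ℓ ⊓
    ⨅ φ : ℝ, Module.End.eigenspace (matrixSubstC (rot3 (-φ)))
      (Complex.exp ((m : ℂ) * (φ : ℂ) * Complex.I))

/-!
In the isotropic coordinates `x₀ = a + b`, `x₁ = i (b - a)`, `x₂ = t` the rotation `diag(R_φ, 1)`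
multiplies `a^p b^q t^r` by `e^{i(q-p)φ}`, so its weight vectors are the polynomials homogeneous for
the grading by `q - p`, and the Laplacian becomes `∂_a ∂_b + ∂_t²`. The latter preserves this
grading, so every harmonic polynomial is a sum of harmonic weight vectors.

Harmonicity determines every coefficient from those with `p = 0` or `q = 0`. On the line
`p + q + r = ℓ`, `q - p = m` there is exactly one such exponent if `|m| ≤ ℓ`, and the line is empty
otherwise; this bounds the dimension. Conversely, the linear form `a - b + t` is isotropic, so its
`ℓ`-th power is harmonic, and the multinomial theorem shows that its component of weight `m` is
nonzero.
-/

section PartialDerivatives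

variable {σ τ R : Type*} [CommSemiring R]

lemma pderiv_aeval [Fintype σ] (f : σ → MvPolynomial τ R) (i : τ) (p : MvPolynomial σ R) :
    pderiv i (aeval f p) = ∑ j, pderiv i (f j) * aeval f (pderiv j p) := by
  classical
  induction p using MvPolynomial.induction_on with
  | C a => simp [algHom_C]
  | add p q hp hq => simp only [map_add, hp, hq, mul_add, Finset.sum_add_distrib]
  | mul_X p k hp =>
    simp only [map_mul, map_add, aeval_X, pderiv_mul, hp, mul_add, Finset.sum_add_distrib,
      Finset.sum_mul, pderiv_X, Pi.single_apply, apply_ite (aeval f), map_zero, mul_ite, mul_one,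
      mul_zero, Finset.sum_ite_eq, Finset.mem_univ, if_true, mul_assoc]
    rw [mul_comm (aeval f p)]

lemma pderiv_pderiv_comm (i j : σ) (p : MvPolynomial σ R) :
    pderiv i (pderiv j p) = pderiv j (pderiv i p) := by
  classical
  ext s
  by_cases hij : i = j
  · rw [hij]
  · simp only [coeff_pderiv, add_right_comm s (Finsupp.single i 1), Finsupp.add_apply,
      Finsupp.single_eq_of_ne hij, Finsupp.single_eq_of_ne (Ne.symm hij), add_zero, mul_right_comm]

lemma pderiv_pderiv_pow_of_pderiv_eq_C {i j : σ} {L : MvPolynomial σ R} {a b : R}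
    (hi : pderiv i L = C a) (hj : pderiv j L = C b) (n : ℕ) :
    pderiv i (pderiv j (L ^ n)) = C (n * (n - 1 : ℕ) * (a * b)) * L ^ (n - 1 - 1) := by
  rw [pderiv_pow, hj, mul_comm, pderiv_C_mul, ← map_natCast C n, pderiv_C_mul, pderiv_pow, hi,
    ← map_natCast C (n - 1)]
  simp only [C_mul]
  ring

end PartialDerivatives

section WeightedComponents

variable {σ R M N : Type*} [CommSemiring R]

lemma pderiv_weightedHomogeneousComponent [AddCancelCommMonoid M] {w : σ → M} {i : σ} {m n : M}
    (hmn : m + w i = n) (p : MvPolynomial σ R) :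
    pderiv i (weightedHomogeneousComponent w n p) =
      weightedHomogeneousComponent w m (pderiv i p) := by
  classical
  ext s
  simp only [coeff_pderiv, coeff_weightedHomogeneousComponent, map_add, Finsupp.weight_single,
    one_smul, ← hmn, add_left_inj, ite_mul, zero_mul]

lemma isWeightedHomogeneous_weightedHomogeneousComponent [AddCommMonoid M] [AddCommMonoid N]
    {v : σ → N} {n : N} {p : MvPolynomial σ R} (hp : IsWeightedHomogeneous v p n)
    (w : σ → M) (m : M) : IsWeightedHomogeneous v (weightedHomogeneousComponent w m p) n := by
  classical
  intro s hs
  rw [coeff_weightedHomogeneousComponent, ite_ne_right_iff] at hs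
  exact hp hs.2

end WeightedComponents

section LinearSubstitutions

variable {σ τ υ R : Type*} [CommSemiring R]

lemma toMvPolynomial_apply_eq_sum [Fintype τ] (A : Matrix σ τ R) (i : σ) :
    A.toMvPolynomial i = ∑ j, A i j • X j := by
  simp only [Matrix.toMvPolynomial, X, smul_monomial, smul_eq_mul, mul_one]

lemma bind₁_toMvPolynomial_bind₁_toMvPolynomial [Fintype τ] [Fintype υ] (A : Matrix σ τ R)
    (B : Matrix τ υ R) (p : MvPolynomial σ R) :
    bind₁ B.toMvPolynomial (bind₁ A.toMvPolynomial p) = bind₁ (A * B).toMvPolynomial p := by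
  rw [bind₁_bind₁, _root_.funext (A.toMvPolynomial_mul B)]

lemma isHomogeneous_bind₁_toMvPolynomial [Fintype τ] (A : Matrix σ τ R) {p : MvPolynomial σ R}
    {n : ℕ} (hp : p.IsHomogeneous n) : (bind₁ A.toMvPolynomial p).IsHomogeneous n :=
  one_mul n ▸ hp.aeval _ A.toMvPolynomial_isHomogeneous

lemma pderiv_bind₁_toMvPolynomial [Fintype σ] [Fintype τ] (A : Matrix σ τ R) (i : τ)
    (p : MvPolynomial σ R) :
    pderiv i (bind₁ A.toMvPolynomial p) = bind₁ A.toMvPolynomial (∑ j, A j i • pderiv j p) := by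
  classical
  have pderiv_coordinate (j : σ) : pderiv i (A.toMvPolynomial j) = C (A j i) := by
    simp [toMvPolynomial_apply_eq_sum, pderiv_X, Pi.single_apply, smul_eq_C_mul]
  simp only [bind₁, pderiv_aeval, pderiv_coordinate, map_sum, map_smul]
  simp only [smul_eq_C_mul]

lemma coeff_bind₁_toMvPolynomial_diagonal [Fintype σ] [DecidableEq σ] (c : σ → R)
    (p : MvPolynomial σ R) (s : σ →₀ ℕ) :
    coeff s (bind₁ (diagonal c).toMvPolynomial p) = (s.prod fun i k => c i ^ k) * coeff s p := by
  have diagonal_eq : (diagonal c).toMvPolynomial = fun i => C (c i) * X i := by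
    ext1 i
    simp [toMvPolynomial_apply_eq_sum, diagonal_apply, smul_eq_C_mul]
  rw [diagonal_eq]
  induction p using MvPolynomial.induction_on' with
  | add p q hp hq => simp only [map_add, coeff_add, hp, hq, mul_add]
  | monomial u a =>
    have bind₁_eq : bind₁ (fun i => C (c i) * X i) (monomial u a) =
        C (u.prod fun i k => c i ^ k) * monomial u a := by
      rw [bind₁_monomial, monomial_eq]
      simp only [mul_pow, Finset.prod_mul_distrib, Finsupp.prod, map_prod, map_pow]
      ring
    rw [bind₁_eq, coeff_C_mul, coeff_monomial]
    split_ifs with hu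
    · rw [hu]
    · simp only [mul_zero]

end LinearSubstitutions

section Characters

variable {σ : Type*}

lemma prod_exp_pow_eq_exp_weight (w : σ → ℤ) (z : ℂ) (s : σ →₀ ℕ) :
    (s.prod fun i k => Complex.exp (w i * z) ^ k) = Complex.exp (Finsupp.weight w s * z) := by
  simp only [Finsupp.weight_apply, Finsupp.prod, Finsupp.sum, ← Complex.exp_nat_mul,
    ← Complex.exp_sum, Int.cast_sum, Finset.sum_mul, nsmul_eq_mul, Int.cast_mul, Int.cast_natCast,
    mul_assoc]

lemma eq_of_forall_exp_mul_I_eq {a b : ℤ}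
    (h : ∀ φ : ℝ, Complex.exp (a * (φ * Complex.I)) = Complex.exp (b * (φ * Complex.I))) :
    a = b := by
  by_contra hab
  have hne : (a : ℂ) - b ≠ 0 := sub_ne_zero.mpr (mod_cast hab)
  -- At `φ = π / (a - b)` the quotient of the two characters is `e^{iπ} = -1`.
  have key := h (Real.pi / (a - b))
  have hexp : (a : ℂ) * ((Real.pi / (a - b) : ℝ) * Complex.I) =
      b * ((Real.pi / (a - b) : ℝ) * Complex.I) + Real.pi * Complex.I := by
    push_cast
    field_simp
    ring
  rw [hexp, Complex.exp_add, Complex.exp_pi_mul_I, mul_neg_one, neg_eq_self] at key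
  exact Complex.exp_ne_zero _ key

lemma forall_bind₁_diagonal_exp_eq_smul_iff [Fintype σ] [DecidableEq σ] (w : σ → ℤ) (m : ℤ)
    (p : MvPolynomial σ ℂ) :
    (∀ φ : ℝ, bind₁ (diagonal fun i => Complex.exp (w i * (φ * Complex.I))).toMvPolynomial p =
        Complex.exp (m * (φ * Complex.I)) • p) ↔ IsWeightedHomogeneous w p m := by
  simp only [MvPolynomial.ext_iff, coeff_bind₁_toMvPolynomial_diagonal, prod_exp_pow_eq_exp_weight,
    coeff_smul, smul_eq_mul]
  constructor
  · intro h s hs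
    exact eq_of_forall_exp_mul_I_eq fun φ => mul_right_cancel₀ hs (h φ s)
  · intro h φ s
    by_cases hs : coeff s p = 0
    · rw [hs, mul_zero, mul_zero]
    · rw [h hs]

end Characters

section Isotropic

/-- The Laplacian `∂_a ∂_b + ∂_t²` in the isotropic coordinates `(a, b, t) = (X 0, X 1, X 2)`. -/
noncomputable def isotropicLaplacian (R : Type*) [CommSemiring R] :
    MvPolynomial (Fin 3) R →ₗ[R] MvPolynomial (Fin 3) R :=
  (pderiv 0).toLinearMap ∘ₗ (pderiv 1).toLinearMap +
    (pderiv 2).toLinearMap ∘ₗ (pderiv 2).toLinearMap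

/-- The homogeneous polynomials of degree `ℓ` annihilated by `isotropicLaplacian`: the space
`H_ℓ` in isotropic coordinates. -/
noncomputable def isotropicHarmonic (R : Type*) [CommSemiring R] (ℓ : ℕ) :
    Submodule R (MvPolynomial (Fin 3) R) :=
  homogeneousSubmodule (Fin 3) R ℓ ⊓ LinearMap.ker (isotropicLaplacian R)

/-- The weights of the isotropic coordinates under rotations about the third axis: `diag(R_φ, 1)`
multiplies `a`, `b`, `t` by `e^{-iφ}`, `e^{iφ}`, `1`. -/
def axialWeight : Fin 3 → ℤ := ![-1, 1, 0]

/-- The weight space of weight `m` in `isotropicHarmonic R ℓ`, defined by the grading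
`axialWeight`. -/
noncomputable def isotropicWeightSpace (R : Type*) [CommSemiring R] (ℓ : ℕ) (m : ℤ) :
    Submodule R (MvPolynomial (Fin 3) R) :=
  isotropicHarmonic R ℓ ⊓ weightedHomogeneousSubmodule R axialWeight m

section CommSemiring

variable {R : Type*} [CommSemiring R]

lemma isotropicLaplacian_apply (p : MvPolynomial (Fin 3) R) :
    isotropicLaplacian R p = pderiv 0 (pderiv 1 p) + pderiv 2 (pderiv 2 p) := rfl

lemma mem_isotropicHarmonic_iff {ℓ : ℕ} {p : MvPolynomial (Fin 3) R} :
    p ∈ isotropicHarmonic R ℓ ↔ p.IsHomogeneous ℓ ∧ isotropicLaplacian R p = 0 := Iff.rfl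

lemma weight_axialWeight (s : Fin 3 →₀ ℕ) : Finsupp.weight axialWeight s = s 1 - s 0 := by
  simp [Finsupp.weight_eq_sum, axialWeight, Fin.sum_univ_three, neg_add_eq_sub]

lemma abs_weight_axialWeight_le (s : Fin 3 →₀ ℕ) :
    |Finsupp.weight axialWeight s| ≤ s.degree := by
  rw [weight_axialWeight, Finsupp.degree_eq_sum, Fin.sum_univ_three, abs_le]
  omega

lemma isotropicWeightSpace_eq_bot {ℓ : ℕ} {m : ℤ} (hm : (ℓ : ℤ) < |m|) :
    isotropicWeightSpace R ℓ m = ⊥ := by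
  refine (Submodule.eq_bot_iff _).mpr fun p ⟨⟨hdeg, _⟩, hweight⟩ => ?_
  ext s
  by_contra hs
  have abs_m_le := abs_weight_axialWeight_le s
  rw [hweight hs, not_imp_comm.mp (IsHomogeneous.coeff_eq_zero hdeg) hs] at abs_m_le
  exact hm.not_ge abs_m_le

lemma isotropicLaplacian_weightedHomogeneousComponent (m : ℤ) (p : MvPolynomial (Fin 3) R) :
    isotropicLaplacian R (weightedHomogeneousComponent axialWeight m p) =
      weightedHomogeneousComponent axialWeight m (isotropicLaplacian R p) := by
  have hb : m - 1 + axialWeight 1 = m := sub_add_cancel m 1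
  have ha : m + axialWeight 0 = m - 1 := rfl
  have ht : m + axialWeight 2 = m := add_zero m
  simp only [isotropicLaplacian_apply, map_add, pderiv_weightedHomogeneousComponent hb,
    pderiv_weightedHomogeneousComponent ha, pderiv_weightedHomogeneousComponent ht]

lemma weightedHomogeneousComponent_mem_isotropicWeightSpace {ℓ : ℕ} {p : MvPolynomial (Fin 3) R}
    (hp : p ∈ isotropicHarmonic R ℓ) (m : ℤ) :
    weightedHomogeneousComponent axialWeight m p ∈ isotropicWeightSpace R ℓ m := by
  obtain ⟨hdeg, hlap⟩ := mem_isotropicHarmonic_iff.mp hp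
  refine ⟨mem_isotropicHarmonic_iff.mpr ⟨?_, ?_⟩, weightedHomogeneousComponent_mem _ _ _⟩
  · exact isWeightedHomogeneous_weightedHomogeneousComponent hdeg _ _
  · rw [isotropicLaplacian_weightedHomogeneousComponent, hlap, map_zero]

lemma iSup_isotropicWeightSpace (ℓ : ℕ) :
    ⨆ m, isotropicWeightSpace R ℓ m = isotropicHarmonic R ℓ := by
  refine le_antisymm (iSup_le fun m => inf_le_left) fun p hp => ?_
  rw [← sum_weightedHomogeneousComponent axialWeight p,
    finsum_eq_sum _ (weightedHomogeneousComponent_finsupp p)]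
  exact Submodule.sum_mem _ fun m _ => Submodule.mem_iSup_of_mem m
    (weightedHomogeneousComponent_mem_isotropicWeightSpace hp m)

lemma coeff_isotropicLaplacian (p : MvPolynomial (Fin 3) R) (s : Fin 3 →₀ ℕ) :
    coeff s (isotropicLaplacian R p) =
      (s 0 + 1) * (s 1 + 1) * coeff (s + Finsupp.single 0 1 + Finsupp.single 1 1) p +
        (s 2 + 1) * (s 2 + 2) * coeff (s + Finsupp.single 2 1 + Finsupp.single 2 1) p := by
  simp only [isotropicLaplacian_apply, coeff_add, coeff_pderiv, Finsupp.add_apply, ne_eq,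
    one_ne_zero, not_false_eq_true, Finsupp.single_eq_of_ne, add_zero, Finsupp.single_eq_same,
    Nat.cast_add, Nat.cast_one]
  ring

lemma eq_zero_of_isotropicLaplacian_eq_zero [NoZeroDivisors R] [CharZero R]
    {p : MvPolynomial (Fin 3) R} (hlap : isotropicLaplacian R p = 0)
    (hboundary : ∀ s, s 0 = 0 ∨ s 1 = 0 → coeff s p = 0) : p = 0 := by
  suffices ∀ n, ∀ s : Fin 3 →₀ ℕ, s 0 = n → coeff s p = 0 by
    ext s
    exact this _ s rfl
  intro n
  induction n with
  | zero => exact fun s hs => hboundary s (.inl hs)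
  | succ n ih =>
    intro s hs
    by_cases hs1 : s 1 = 0
    · exact hboundary s (.inr hs1)
    obtain ⟨u, rfl⟩ : ∃ u, s = u + Finsupp.single 0 1 + Finsupp.single 1 1 := by
      refine ⟨s - Finsupp.single 0 1 - Finsupp.single 1 1, ?_⟩
      ext i
      fin_cases i <;> simp <;> omega
    have hrec := coeff_isotropicLaplacian p u
    rw [hlap, coeff_zero, ih (u + Finsupp.single 2 1 + Finsupp.single 2 1) (by simpa using hs),
      mul_zero, add_zero, eq_comm] at hrec
    refine (mul_eq_zero.mp hrec).resolve_left ?_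
    exact mul_ne_zero (Nat.cast_add_one_ne_zero _) (Nat.cast_add_one_ne_zero _)

/-- The unique exponent of degree `ℓ` and axial weight `m` that does not involve both `a` and `b`.
It has these properties only for `|m| ≤ ℓ`: otherwise the subtraction `ℓ - |m|` truncates. -/
noncomputable def boundaryExponent (ℓ : ℕ) (m : ℤ) : Fin 3 →₀ ℕ :=
  Finsupp.equivFunOnFinite.symm ![(-m).toNat, m.toNat, ℓ - m.natAbs]

lemma eq_boundaryExponent {s : Fin 3 →₀ ℕ} (hs : s 0 = 0 ∨ s 1 = 0) :
    s = boundaryExponent s.degree (Finsupp.weight axialWeight s) := by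
  rw [Finsupp.degree_eq_sum, Fin.sum_univ_three, weight_axialWeight]
  ext i
  fin_cases i <;> simp [boundaryExponent] <;> omega

lemma degree_boundaryExponent {ℓ : ℕ} {m : ℤ} (hm : |m| ≤ (ℓ : ℤ)) :
    (boundaryExponent ℓ m).degree = ℓ := by
  rw [Finsupp.degree_eq_sum, Fin.sum_univ_three]
  rw [Int.abs_eq_natAbs] at hm
  simp only [boundaryExponent, Finsupp.equivFunOnFinite_symm_apply_apply, cons_val]
  omega

lemma weight_boundaryExponent (ℓ : ℕ) (m : ℤ) :
    Finsupp.weight axialWeight (boundaryExponent ℓ m) = m := by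
  rw [weight_axialWeight]
  simp only [boundaryExponent, Finsupp.equivFunOnFinite_symm_apply_apply, cons_val]
  omega

lemma eq_zero_of_coeff_boundaryExponent_eq_zero [NoZeroDivisors R] [CharZero R]
    {ℓ : ℕ} {m : ℤ} {p : MvPolynomial (Fin 3) R} (hp : p ∈ isotropicWeightSpace R ℓ m)
    (hcoeff : coeff (boundaryExponent ℓ m) p = 0) : p = 0 := by
  obtain ⟨⟨hdeg, hlap⟩, hweight⟩ := hp
  refine eq_zero_of_isotropicLaplacian_eq_zero hlap fun s hs => ?_
  by_contra hne
  have hsℓ : s.degree = ℓ := not_imp_comm.mp (IsHomogeneous.coeff_eq_zero hdeg) hne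
  have hsm : Finsupp.weight axialWeight s = m := hweight hne
  rw [eq_boundaryExponent hs, hsℓ, hsm] at hne
  exact hne hcoeff

end CommSemiring

/-- The linear form `a - b + t`. Its powers are harmonic because its coefficient vector
`(1, -1, 1)` is a zero of the symbol `ξ_a ξ_b + ξ_t²` of `isotropicLaplacian`. -/
noncomputable def isotropicForm (R : Type*) [CommRing R] : MvPolynomial (Fin 3) R :=
  ∑ i, (![1, -1, 1] : Fin 3 → R) i • X i

section CommRing

variable {R : Type*} [CommRing R]

lemma isotropicForm_pow_mem_isotropicHarmonic (ℓ : ℕ) :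
    isotropicForm R ^ ℓ ∈ isotropicHarmonic R ℓ := by
  have hderiv (i : Fin 3) : pderiv i (isotropicForm R) = C ((![1, -1, 1] : Fin 3 → R) i) := by
    simp [isotropicForm, pderiv_X, Pi.single_apply, smul_eq_C_mul]
  refine mem_isotropicHarmonic_iff.mpr ⟨?_, ?_⟩
  · have hform : (isotropicForm R).IsHomogeneous 1 :=
      Submodule.sum_mem (homogeneousSubmodule (Fin 3) R 1) fun i _ =>
        Submodule.smul_mem _ _ (isHomogeneous_X R i)
    simpa only [one_mul] using hform.pow ℓ
  · rw [isotropicLaplacian_apply, pderiv_pderiv_pow_of_pderiv_eq_C (hderiv 0) (hderiv 1),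
      pderiv_pderiv_pow_of_pderiv_eq_C (hderiv 2) (hderiv 2), ← add_mul, ← C_add, ← mul_add]
    simp

lemma coeff_isotropicForm_pow_ne_zero [IsDomain R] [CharZero R] (s : Fin 3 →₀ ℕ) :
    coeff s (isotropicForm R ^ s.degree) ≠ 0 := by
  have hdegree : (s.sum fun _ k => k) = s.degree := s.degree_apply.symm
  rw [isotropicForm, coeff_linearCombination_X_pow_of_fintype, if_pos hdegree]
  refine mul_ne_zero (Nat.cast_ne_zero.mpr (Nat.multinomial_pos _ _).ne') ?_
  refine Finset.prod_ne_zero_iff.mpr fun i _ => pow_ne_zero _ ?_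
  fin_cases i <;> simp

end CommRing

lemma finrank_isotropicWeightSpace (K : Type*) [Field K] [CharZero K] {ℓ : ℕ} {m : ℤ}
    (hm : |m| ≤ (ℓ : ℤ)) : Module.finrank K (isotropicWeightSpace K ℓ m) = 1 := by
  set e := boundaryExponent ℓ m
  set v := weightedHomogeneousComponent axialWeight m (isotropicForm K ^ ℓ)
  have hv : v ∈ isotropicWeightSpace K ℓ m :=
    weightedHomogeneousComponent_mem_isotropicWeightSpace
      (isotropicForm_pow_mem_isotropicHarmonic ℓ) m
  have hve : coeff e v ≠ 0 := by
    rw [coeff_weightedHomogeneousComponent, if_pos (weight_boundaryExponent ℓ m),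
      ← degree_boundaryExponent hm]
    exact coeff_isotropicForm_pow_ne_zero e
  refine finrank_eq_one (⟨v, hv⟩ : isotropicWeightSpace K ℓ m) ?_ fun ⟨p, hp⟩ => ?_
  · rw [Ne, Submodule.mk_eq_zero]
    intro hv0
    exact hve (by rw [hv0, coeff_zero])
  · set c := coeff e p / coeff e v
    have hsub : c • v - p = 0 := by
      refine eq_zero_of_coeff_boundaryExponent_eq_zero
        (sub_mem (Submodule.smul_mem _ _ hv) hp) ?_
      rw [coeff_sub, coeff_smul, smul_eq_mul, div_mul_cancel₀ _ hve, sub_self]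
    exact ⟨c, Subtype.ext (sub_eq_zero.mp hsub)⟩

end Isotropic

section Coordinates

/-- The matrix of the coordinate change `x₀ = a + b`, `x₁ = i (b - a)`, `x₂ = t`. -/
def isotropicBasis : Matrix (Fin 3) (Fin 3) ℂ :=
  !![1, 1, 0; -Complex.I, Complex.I, 0; 0, 0, 1]

/-- The inverse of `isotropicBasis`: `a = (x₀ + i x₁) / 2`, `b = (x₀ - i x₁) / 2`, `t = x₂`. -/
noncomputable def isotropicBasisInv : Matrix (Fin 3) (Fin 3) ℂ :=
  !![1 / 2, Complex.I / 2, 0; 1 / 2, -Complex.I / 2, 0; 0, 0, 1]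

lemma isotropicBasis_mul_isotropicBasisInv : isotropicBasis * isotropicBasisInv = 1 := by
  rw [isotropicBasis, isotropicBasisInv, mul_fin_three, one_fin_three]
  congr! 4 <;> grind [Complex.I_mul_I]

lemma isotropicBasisInv_mul_isotropicBasis : isotropicBasisInv * isotropicBasis = 1 :=
  mul_eq_one_comm.mp isotropicBasis_mul_isotropicBasisInv

lemma rot3_neg_mul_isotropicBasis (φ : ℝ) :
    (rot3 (-φ)).map Complex.ofReal * isotropicBasis =
      isotropicBasis * diagonal fun i => Complex.exp (axialWeight i * (φ * Complex.I)) := by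
  have exp_neg : Complex.exp (-(φ * Complex.I)) = Complex.cos φ - Complex.sin φ * Complex.I := by
    rw [← neg_mul, Complex.exp_mul_I, Complex.cos_neg, Complex.sin_neg, neg_mul, sub_eq_add_neg]
  have rot3_eq : (rot3 (-φ)).map Complex.ofReal =
      !![Complex.cos φ, Complex.sin φ, 0; -Complex.sin φ, Complex.cos φ, 0; 0, 0, 1] := by
    ext i j
    fin_cases i <;> fin_cases j <;> simp [rot3]
  have diagonal_eq : (diagonal fun i => Complex.exp (axialWeight i * (φ * Complex.I))) =
      !![Complex.cos φ - Complex.sin φ * Complex.I, 0, 0;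
        0, Complex.cos φ + Complex.sin φ * Complex.I, 0; 0, 0, 1] := by
    ext i j
    fin_cases i <;> fin_cases j <;> simp [axialWeight, exp_neg, Complex.exp_mul_I]
  rw [rot3_eq, diagonal_eq, isotropicBasis, mul_fin_three, mul_fin_three]
  congr! 4 <;> grind [Complex.I_mul_I]

/-- Rewrites a polynomial in `(x₀, x₁, x₂)` as a polynomial in the isotropic coordinates
`(a, b, t)`. -/
noncomputable def toIsotropicCoords : MvPolynomial (Fin 3) ℂ ≃ₐ[ℂ] MvPolynomial (Fin 3) ℂ :=
  AlgEquiv.ofAlgHom (bind₁ isotropicBasis.toMvPolynomial) (bind₁ isotropicBasisInv.toMvPolynomial)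
    (AlgHom.ext fun p => by
      simp [bind₁_toMvPolynomial_bind₁_toMvPolynomial, isotropicBasisInv_mul_isotropicBasis])
    (AlgHom.ext fun p => by
      simp [bind₁_toMvPolynomial_bind₁_toMvPolynomial, isotropicBasis_mul_isotropicBasisInv])

lemma isHomogeneous_toIsotropicCoords_iff {p : MvPolynomial (Fin 3) ℂ} {n : ℕ} :
    (toIsotropicCoords p).IsHomogeneous n ↔ p.IsHomogeneous n := by
  refine ⟨fun h => ?_, isHomogeneous_bind₁_toMvPolynomial isotropicBasis⟩
  rw [← toIsotropicCoords.symm_apply_apply p]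
  exact isHomogeneous_bind₁_toMvPolynomial isotropicBasisInv h

lemma pderiv_toIsotropicCoords (i : Fin 3) (p : MvPolynomial (Fin 3) ℂ) :
    pderiv i (toIsotropicCoords p) = toIsotropicCoords (∑ j, isotropicBasis j i • pderiv j p) :=
  pderiv_bind₁_toMvPolynomial isotropicBasis i p

lemma laplacianC_apply (p : MvPolynomial (Fin 3) ℂ) :
    laplacianC p = pderiv 0 (pderiv 0 p) + pderiv 1 (pderiv 1 p) + pderiv 2 (pderiv 2 p) := by
  simp [laplacianC, Fin.sum_univ_three]

lemma isotropicLaplacian_toIsotropicCoords (p : MvPolynomial (Fin 3) ℂ) :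
    isotropicLaplacian ℂ (toIsotropicCoords p) = toIsotropicCoords (laplacianC p) := by
  have ha (q : MvPolynomial (Fin 3) ℂ) : pderiv 0 (toIsotropicCoords q) =
      toIsotropicCoords (pderiv 0 q - Complex.I • pderiv 1 q) := by
    simp [pderiv_toIsotropicCoords, isotropicBasis, Fin.sum_univ_three, sub_eq_add_neg]
  have hb (q : MvPolynomial (Fin 3) ℂ) : pderiv 1 (toIsotropicCoords q) =
      toIsotropicCoords (pderiv 0 q + Complex.I • pderiv 1 q) := by
    simp [pderiv_toIsotropicCoords, isotropicBasis, Fin.sum_univ_three]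
  have ht (q : MvPolynomial (Fin 3) ℂ) : pderiv 2 (toIsotropicCoords q) =
      toIsotropicCoords (pderiv 2 q) := by
    simp [pderiv_toIsotropicCoords, isotropicBasis, Fin.sum_univ_three]
  rw [isotropicLaplacian_apply, hb, ha, ht, ht, ← map_add, laplacianC_apply]
  congr 1
  simp only [map_add, Derivation.map_smul, pderiv_pderiv_comm 1 0 p, smul_add, smul_smul,
    Complex.I_mul_I]
  module

lemma toIsotropicCoords_matrixSubstC_rot3 (φ : ℝ) (p : MvPolynomial (Fin 3) ℂ) :
    toIsotropicCoords (matrixSubstC (rot3 (-φ)) p) =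
      bind₁ (diagonal fun i => Complex.exp (axialWeight i * (φ * Complex.I))).toMvPolynomial
        (toIsotropicCoords p) := by
  have matrixSubstC_eq : matrixSubstC (rot3 (-φ)) p =
      bind₁ ((rot3 (-φ)).map Complex.ofReal).toMvPolynomial p := by
    rw [_root_.funext (toMvPolynomial_apply_eq_sum ((rot3 (-φ)).map Complex.ofReal))]
    rfl
  rw [matrixSubstC_eq]
  change bind₁ _ (bind₁ _ p) = bind₁ _ (bind₁ _ p)
  simp only [bind₁_toMvPolynomial_bind₁_toMvPolynomial, rot3_neg_mul_isotropicBasis]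

lemma toIsotropicCoords_mem_isotropicHarmonic_iff {ℓ : ℕ} {p : MvPolynomial (Fin 3) ℂ} :
    toIsotropicCoords p ∈ isotropicHarmonic ℂ ℓ ↔ p ∈ harmonicHomogC ℓ := by
  rw [mem_isotropicHarmonic_iff, isHomogeneous_toIsotropicCoords_iff,
    isotropicLaplacian_toIsotropicCoords, map_eq_zero_iff _ toIsotropicCoords.injective]
  rfl

lemma toIsotropicCoords_mem_isotropicWeightSpace_iff {ℓ : ℕ} {m : ℤ}
    {p : MvPolynomial (Fin 3) ℂ} :
    toIsotropicCoords p ∈ isotropicWeightSpace ℂ ℓ m ↔ p ∈ weightSpace ℓ m := by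
  rw [isotropicWeightSpace, weightSpace, Submodule.mem_inf, Submodule.mem_inf,
    toIsotropicCoords_mem_isotropicHarmonic_iff, mem_weightedHomogeneousSubmodule,
    ← forall_bind₁_diagonal_exp_eq_smul_iff, Submodule.mem_iInf]
  simp only [← toIsotropicCoords_matrixSubstC_rot3, ← map_smul, EmbeddingLike.apply_eq_iff_eq,
    Module.End.mem_eigenspace_iff, mul_assoc]

lemma harmonicHomogC_eq_map (ℓ : ℕ) :
    harmonicHomogC ℓ =
      (isotropicHarmonic ℂ ℓ).map (toIsotropicCoords.symm.toLinearEquiv : _ →ₗ[ℂ] _) := by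
  ext p
  rw [Submodule.mem_map_equiv]
  exact toIsotropicCoords_mem_isotropicHarmonic_iff.symm

lemma weightSpace_eq_map (ℓ : ℕ) (m : ℤ) :
    weightSpace ℓ m =
      (isotropicWeightSpace ℂ ℓ m).map (toIsotropicCoords.symm.toLinearEquiv : _ →ₗ[ℂ] _) := by
  ext p
  rw [Submodule.mem_map_equiv]
  exact toIsotropicCoords_mem_isotropicWeightSpace_iff.symm

end Coordinates

/-- For `ℓ ≥ 0` and each integer `m`, the subspace of `H_ℓ^ℂ` on which the embedded rotation
`diag(R_φ, 1)` acts as multiplication by `e^{imφ}` has complex dimension `1` if `|m| ≤ ℓ`, and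
is zero if `|m| > ℓ`; consequently, the restriction of the representation to the embedded
`SO(2)` is the direct sum of the characters `φ ↦ e^{imφ}`, `−ℓ ≤ m ≤ ℓ`, each with
multiplicity one. -/
theorem weightSpaces_of_harmonic (ℓ : ℕ) :
    (∀ m : ℤ, |m| ≤ (ℓ : ℤ) → Module.finrank ℂ (weightSpace ℓ m) = 1) ∧
    (∀ m : ℤ, (ℓ : ℤ) < |m| → weightSpace ℓ m = ⊥) ∧
    (⨆ m : ℤ, weightSpace ℓ m) = harmonicHomogC ℓ := by
  refine ⟨fun m hm => ?_, fun m hm => ?_, ?_⟩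
  · rw [weightSpace_eq_map]
    exact (LinearEquiv.finrank_map_eq _ _).trans (finrank_isotropicWeightSpace ℂ hm)
  · rw [weightSpace_eq_map, isotropicWeightSpace_eq_bot hm, Submodule.map_bot]
  · simp only [weightSpace_eq_map, harmonicHomogC_eq_map, ← Submodule.map_iSup,
      iSup_isotropicWeightSpace]
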